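/- Let N be a finite commutative nilsemigroup. Then E(N) ≤ D(N) + κ(N) − 1. -/

import Mathlib

namespace EGZ

variable {S : Type}

/-- `rep a n = (n+1)·a`, the (n+1)-fold sum of `a` with itself (defined for semigroups,
where the 0-fold sum is unavailable). -/
def rep [AddCommSemigroup S] (a : S) : ℕ → S
  | 0 => a
  | n + 1 => rep a n + a

/-- The sum of all terms of a sequence (= multiset) over the semigroup `S`, computed in
`WithZero S` (i.e. `S` with an extra identity element `0` adjoined); the empty sequence
has sum `0`, and a nonempty sequence has sum `↑s` where `s ∈ S` is its genuine sum. -/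
def mSum [AddCommSemigroup S] (T : Multiset S) : WithZero S :=
  (T.map (fun s => (s : WithZero S))).sum

/-- `σ(A) = σ(B)`, with the paper's convention: the empty sequence is regarded as having
sum equal to the identity element `e` of `S`, whenever `S` has an identity element. -/
def EqSum [AddCommSemigroup S] (A B : Multiset S) : Prop :=
  mSum A = mSum B ∨
    ∃ e : S, (∀ a : S, e + a = a) ∧
      ((mSum A = 0 ∧ mSum B = (e : WithZero S)) ∨
        (mSum A = (e : WithZero S) ∧ mSum B = 0))

/-- A sequence `T` over `S` is reducible if some proper subsequence `B` of `T`
satisfies `σ(B) = σ(T)`. -/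
def Reducible [AddCommSemigroup S] (T : Multiset S) : Prop :=
  ∃ B : Multiset S, B < T ∧ EqSum B T

/-- The (large) Davenport constant `D(S)`: the smallest `ℓ` such that every sequence over
`S` of length at least `ℓ` is reducible. -/
noncomputable def DavC (S : Type) [AddCommSemigroup S] : ℕ :=
  sInf {ℓ : ℕ | ∀ T : Multiset S, ℓ ≤ Multiset.card T → Reducible T}

/-- The property defining the small Davenport constant: `ℓ` is admissible if for every `m`
and every `c₁, …, c_m ∈ S` there is `J ⊆ [1, m]` with `|J| ≤ ℓ` and `Σ_{j=1}^m c_j = Σ_{j∈J} c_j`. -/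
def SmallDavProp (S : Type) [AddCommSemigroup S] (ℓ : ℕ) : Prop :=
  ∀ (m : ℕ) (c : Fin m → S), ∃ J : Finset (Fin m),
    J.card ≤ ℓ ∧ EqSum (J.val.map c) ((Finset.univ : Finset (Fin m)).val.map c)

/-- The small Davenport constant `d(S)`. -/
noncomputable def smallDavC (S : Type) [AddCommSemigroup S] : ℕ :=
  sInf {ℓ : ℕ | SmallDavProp S ℓ}

/-- The period of an element `a ∈ S`: the least `t > 0` such that `r·a = (r+t)·a`
for some `r > 0`. -/
noncomputable def period [AddCommSemigroup S] (a : S) : ℕ :=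
  sInf {t : ℕ | 0 < t ∧ ∃ k : ℕ, rep a (k + t) = rep a k}

/-- `exp(S)`: the least common multiple of the periods of all elements of `S`. -/
noncomputable def expS (S : Type) [AddCommSemigroup S] [Fintype S] : ℕ :=
  (Finset.univ : Finset S).lcm (fun a => period a)

/-- `κ(S) = ⌈|S| / exp(S)⌉ · exp(S)`. -/
noncomputable def kappa (S : Type) [AddCommSemigroup S] [Fintype S] : ℕ :=
  ((Fintype.card S + expS S - 1) / expS S) * expS S

/-- `E(S)`: the smallest positive integer `ℓ` such that every sequence `T` over `S` of
length at least `ℓ` contains a subsequence `T'` with `|T| - |T'| = κ(S)` and `σ(T') = σ(T)`. -/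
noncomputable def EC (S : Type) [AddCommSemigroup S] [Fintype S] : ℕ :=
  sInf {ℓ : ℕ | 0 < ℓ ∧ ∀ T : Multiset S, ℓ ≤ Multiset.card T →
    ∃ B : Multiset S, B ≤ T ∧ Multiset.card T - Multiset.card B = kappa S ∧ EqSum B T}

end EGZ

/-- A commutative nilsemigroup: a commutative semigroup with a zero element `z`
(`z + a = z` for all `a`) in which every element `x` is nilpotent, i.e. `n·x = z`
for some `n > 0` (`EGZ.rep x n = (n+1)·x`). -/
def IsNilsemigroup (N : Type) [AddCommSemigroup N] : Prop :=
  ∃ z : N, (∀ a : N, z + a = z) ∧ ∀ x : N, ∃ n : ℕ, EGZ.rep x n = z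

/-!
Let `z` be the zero element of `N`. If `s + c = s`, then `s + n·c = s` for all `n`, so `s = z` by
nilpotency. Hence a sequence whose sum is not `z` never has the same sum as a proper subsequence,
and its prefix sums are pairwise distinct. They also avoid `z`, so there are at most `|N|` of them
(counting the empty sum), and every sequence of length at least `|N|` must sum to `z`. Moreover all
periods are `1`, so that `κ(N) = |N|`.

Let `T` have length at least `D(N) + |N| - 1`. Reducing repeatedly, `T` has a subsequence `B` with
the same sum and fewer than `D(N)` terms. Any subsequence of `T` of length `|T| - |N|` that contains
`B` has the same sum too, because adding terms to a sequence of sum `z` does not change the sum.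
-/

namespace EGZ

theorem exists_between_card_eq {α : Type*} {B T : Multiset α} {n : ℕ} (hBT : B ≤ T)
    (hB : Multiset.card B ≤ n) (hT : n ≤ Multiset.card T) :
    ∃ C, B ≤ C ∧ C ≤ T ∧ Multiset.card C = n := by
  obtain ⟨R, rfl⟩ := Multiset.le_iff_exists_add.1 hBT
  rw [Multiset.card_add] at hT
  have hpos : 0 < Multiset.card (R.powersetCard (n - Multiset.card B)) := by
    rw [Multiset.card_powersetCard]
    exact Nat.choose_pos (by omega)
  obtain ⟨Q, hQ⟩ := Multiset.card_pos_iff_exists_mem.1 hpos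
  obtain ⟨hQR, hQcard⟩ := Multiset.mem_powersetCard.1 hQ
  refine ⟨B + Q, Multiset.le_add_right B Q, by gcongr, ?_⟩
  rw [Multiset.card_add]
  omega

theorem exists_strictMono_le {α : Type*} (T : Multiset α) :
    ∃ c : Fin (Multiset.card T + 1) → Multiset α, StrictMono c ∧ ∀ i, c i ≤ T := by
  obtain ⟨l, rfl⟩ : ∃ l : List α, (l : Multiset α) = T := Quot.exists_rep T
  refine ⟨fun i => (l.take i : Multiset α), fun i j hij => ?_,
    fun i => Multiset.coe_le.2 (l.take_sublist i).subperm⟩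
  refine lt_of_le_of_ne
    (Multiset.coe_le.2 (List.take_sublist_take_left hij.le).subperm) fun heq => hij.ne ?_
  have hlength := congrArg Multiset.card heq
  simp only [Multiset.coe_card, List.length_take] at hlength
  have hi : i ≤ l.length := i.is_le
  have hj : j ≤ l.length := j.is_le
  exact Fin.ext (by omega)

section Semigroup

variable {S : Type} [AddCommSemigroup S] {A B C T : Multiset S}

theorem mSum_add (A B : Multiset S) : mSum (A + B) = mSum A + mSum B := by
  simp [mSum]

theorem mSum_cons (a : S) (B : Multiset S) : mSum (a ::ₘ B) = a + mSum B := by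
  simp [mSum]

theorem exists_mSum_eq_coe (hT : T ≠ 0) : ∃ a : S, mSum T = a := by
  obtain ⟨a, ha⟩ := Multiset.exists_mem_of_ne_zero hT
  obtain ⟨R, rfl⟩ := Multiset.exists_cons_of_mem ha
  rw [mSum_cons]
  cases mSum R with
  | zero => exact ⟨a, add_zero _⟩
  | coe b => exact ⟨a + b, rfl⟩

theorem eqSum_iff :
    EqSum A B ↔ mSum A = mSum B ∨
      ∃ e : S, (∀ a : S, e + a = a) ∧ (e : WithZero S) + mSum A = e + mSum B := by
  constructor
  · rintro (h | ⟨e, he, ⟨hA, hB⟩ | ⟨hA, hB⟩⟩)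
    · exact Or.inl h
    all_goals exact Or.inr ⟨e, he, by rw [hA, hB, add_zero, ← WithZero.coe_add, he]⟩
  · rintro (h | ⟨e, he, h⟩)
    · exact Or.inl h
    · unfold EqSum
      cases hA : mSum A <;> cases hB : mSum B <;>
        simp only [hA, hB, add_zero, ← WithZero.coe_add, he] at h
      · exact Or.inl rfl
      · exact Or.inr ⟨e, he, Or.inl ⟨rfl, h.symm⟩⟩
      · exact Or.inr ⟨e, he, Or.inr ⟨h, rfl⟩⟩
      · exact Or.inl h

theorem EqSum.trans (hAB : EqSum A B) (hBC : EqSum B C) : EqSum A C := by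
  rw [eqSum_iff] at *
  rcases hAB with hAB | ⟨e, he, hAB⟩ <;> rcases hBC with hBC | ⟨f, hf, hBC⟩
  · exact Or.inl (hAB.trans hBC)
  · exact Or.inr ⟨f, hf, hAB ▸ hBC⟩
  · exact Or.inr ⟨e, he, hBC ▸ hAB⟩
  · obtain rfl : e = f := by rw [← hf e, add_comm, he]
    exact Or.inr ⟨e, he, hAB.trans hBC⟩

theorem EqSum.add_right (h : EqSum A B) (C : Multiset S) : EqSum (A + C) (B + C) := by
  rw [eqSum_iff] at *
  simp only [mSum_add, ← add_assoc]
  rcases h with h | ⟨e, he, h⟩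
  · exact Or.inl (by rw [h])
  · exact Or.inr ⟨e, he, by rw [h]⟩

theorem exists_lt_mSum_eq_of_lt_of_le (hAC : A < C) (hCT : C ≤ T) (h : mSum A = mSum C) :
    ∃ B < T, mSum B = mSum T := by
  obtain ⟨R, rfl⟩ := Multiset.le_iff_exists_add.1 hCT
  exact ⟨A + R, by gcongr, by rw [mSum_add, mSum_add, h]⟩

theorem exists_lt_mSum_eq_of_card_lt (F : Finset S)
    (hF : ∀ B ≤ T, ∀ a : S, mSum B = a → a ∈ F) (hcard : F.card < Multiset.card T) :
    ∃ B < T, mSum B = mSum T := by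
  classical
  obtain ⟨c, c_strictMono, c_le⟩ := exists_strictMono_le T
  let F₀ : Finset (WithZero S) := insert 0 (F.image (↑))
  have mapsTo : ∀ i ∈ Finset.univ, mSum (c i) ∈ F₀ := by
    intro i _
    cases h : mSum (c i) with
    | zero => exact Finset.mem_insert_self _ _
    | coe a =>
      exact Finset.mem_insert_of_mem (Finset.mem_image_of_mem _ (hF _ (c_le i) a h))
  have card_lt : F₀.card < (Finset.univ : Finset (Fin (Multiset.card T + 1))).card := by
    rw [Finset.card_fin]
    calc F₀.card ≤ F.card + 1 :=
          (Finset.card_insert_le _ _).trans (Nat.succ_le_succ Finset.card_image_le)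
      _ < Multiset.card T + 1 := Nat.succ_lt_succ hcard
  obtain ⟨i, -, j, -, hne, heq⟩ :=
    Finset.exists_ne_map_eq_of_card_lt_of_maps_to card_lt mapsTo
  rcases hne.lt_or_gt with hij | hji
  · exact exists_lt_mSum_eq_of_lt_of_le (c_strictMono hij) (c_le j) heq
  · exact exists_lt_mSum_eq_of_lt_of_le (c_strictMono hji) (c_le i) heq.symm

theorem reducible_of_card_lt [Fintype S] (hT : Fintype.card S < Multiset.card T) :
    Reducible T := by
  obtain ⟨B, hBT, hB⟩ :=
    exists_lt_mSum_eq_of_card_lt Finset.univ (fun _ _ a _ => Finset.mem_univ a) hT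
  exact ⟨B, hBT, Or.inl hB⟩

theorem reducible_of_davC_le [Finite S] (hT : DavC S ≤ Multiset.card T) : Reducible T := by
  cases nonempty_fintype S
  exact Nat.sInf_mem (s := {ℓ | ∀ T : Multiset S, ℓ ≤ Multiset.card T → Reducible T})
    ⟨Fintype.card S + 1, fun _ => reducible_of_card_lt⟩ T hT

theorem exists_le_card_lt_davC_eqSum [Finite S] (T : Multiset S) :
    ∃ B ≤ T, Multiset.card B < DavC S ∧ EqSum B T := by
  induction T using Multiset.strongInductionOn with
  | ih T ih =>
    rcases lt_or_ge (Multiset.card T) (DavC S) with hT | hT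
    · exact ⟨T, le_rfl, hT, Or.inl rfl⟩
    · obtain ⟨B, hBT, hB⟩ := reducible_of_davC_le hT
      obtain ⟨C, hCB, hCcard, hC⟩ := ih B hBT
      exact ⟨C, hCB.trans hBT.le, hCcard, hC.trans hB⟩

theorem davC_pos [Finite S] : 0 < DavC S := by
  obtain ⟨B, -, hB, -⟩ := exists_le_card_lt_davC_eqSum (0 : Multiset S)
  exact (Nat.zero_le _).trans_lt hB

theorem add_rep_eq_self {s : WithZero S} {c : S} (h : s + c = s) (n : ℕ) :
    s + (rep c n : S) = s := by
  induction n with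
  | zero => exact h
  | succ n ih => rw [rep, WithZero.coe_add, ← add_assoc, ih, h]

theorem period_eq_one_of_rep_succ_eq {a : S} {k : ℕ} (h : rep a (k + 1) = rep a k) :
    period a = 1 := by
  have hmem : 1 ∈ {t : ℕ | 0 < t ∧ ∃ k : ℕ, rep a (k + t) = rep a k} := ⟨one_pos, k, h⟩
  exact le_antisymm (Nat.sInf_le hmem) (Nat.sInf_mem ⟨1, hmem⟩).1

theorem kappa_eq_card [Fintype S] (h : ∀ a : S, period a = 1) : kappa S = Fintype.card S := by
  have hexp : expS S = 1 := Nat.dvd_one.1 (Finset.lcm_dvd fun a _ => (h a).dvd)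
  simp [kappa, hexp]

end Semigroup

section Absorbing

variable {S : Type} [AddCommSemigroup S] {z : S} {B C T : Multiset S}

/-- `z` is a zero element of `S`, the element written `∞` in additive notation; the word zero is
avoided because `0 : WithZero S` is the adjoined identity. -/
def IsAbsorbing (z : S) : Prop :=
  ∀ a : S, z + a = z

theorem IsAbsorbing.coe_add (hz : IsAbsorbing z) (s : WithZero S) : (z : WithZero S) + s = z := by
  cases s with
  | zero => exact add_zero _
  | coe a => rw [← WithZero.coe_add, hz a]

theorem IsAbsorbing.mSum_eq_of_le (hz : IsAbsorbing z) (hBT : B ≤ T) (hB : mSum B = z) :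
    mSum T = z := by
  obtain ⟨R, rfl⟩ := Multiset.le_iff_exists_add.1 hBT
  rw [mSum_add, hB, hz.coe_add]

theorem EqSum.of_le (hz : IsAbsorbing z) (hT : mSum T = z) (hB : EqSum B T)
    (hBC : B ≤ C) : EqSum C T := by
  obtain ⟨R, rfl⟩ := Multiset.le_iff_exists_add.1 hBC
  have hTR : mSum (T + R) = mSum T := by rw [mSum_add, hT, hz.coe_add]
  exact (hB.add_right R).trans (Or.inl hTR)

theorem IsAbsorbing.period_eq_one (hz : IsAbsorbing z) {a : S} {n : ℕ} (ha : rep a n = z) :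
    period a = 1 :=
  period_eq_one_of_rep_succ_eq (k := n) (by rw [rep, ha, hz a])

theorem IsAbsorbing.eq_of_add_eq_self (hz : IsAbsorbing z) {s : WithZero S} {c : S} {n : ℕ}
    (hc : rep c n = z) (h : s + c = s) : s = z := by
  rw [← add_rep_eq_self h n, hc, add_comm, hz.coe_add]

theorem IsAbsorbing.mSum_eq_of_lt_of_mSum_eq (hz : IsAbsorbing z)
    (hnil : ∀ x : S, ∃ n, rep x n = z) (hBT : B < T) (h : mSum B = mSum T) : mSum T = z := by
  obtain ⟨R, rfl⟩ := Multiset.le_iff_exists_add.1 hBT.le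
  have hR : R ≠ 0 := by
    rintro rfl
    exact hBT.ne (add_zero B).symm
  obtain ⟨c, hc⟩ := exists_mSum_eq_coe hR
  obtain ⟨n, hn⟩ := hnil c
  rw [mSum_add, hc] at h
  rw [mSum_add, hc, ← h]
  exact hz.eq_of_add_eq_self hn h.symm

theorem IsAbsorbing.mSum_eq_of_card_le [Fintype S] (hz : IsAbsorbing z)
    (hnil : ∀ x : S, ∃ n, rep x n = z) (hT : Fintype.card S ≤ Multiset.card T) :
    mSum T = z := by
  classical
  by_contra hne
  have mem_erase : ∀ B ≤ T, ∀ a : S, mSum B = a → a ∈ Finset.univ.erase z := by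
    intro B hBT a hB
    refine Finset.mem_erase_of_ne_of_mem ?_ (Finset.mem_univ a)
    rintro rfl
    exact hne (hz.mSum_eq_of_le hBT hB)
  have card_erase_lt : (Finset.univ.erase z).card < Multiset.card T :=
    (Finset.card_erase_lt_of_mem (Finset.mem_univ z)).trans_le hT
  obtain ⟨B, hBT, hB⟩ := exists_lt_mSum_eq_of_card_lt _ mem_erase card_erase_lt
  exact hne (hz.mSum_eq_of_lt_of_mSum_eq hnil hBT hB)

end Absorbing

end EGZ

/-- For a finite commutative nilsemigroup `N`, `E(N) ≤ D(N) + κ(N) − 1`. -/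
theorem E_le_of_nilsemigroup (N : Type) [AddCommSemigroup N] [Fintype N]
    (hnil : IsNilsemigroup N) :
    EGZ.EC N ≤ EGZ.DavC N + EGZ.kappa N - 1 := by
  obtain ⟨z, (hz : EGZ.IsAbsorbing z), hnil⟩ := hnil
  have hkappa : EGZ.kappa N = Fintype.card N := by
    refine EGZ.kappa_eq_card fun a => ?_
    obtain ⟨n, hn⟩ := hnil a
    exact hz.period_eq_one hn
  have hcard : 0 < Fintype.card N := Fintype.card_pos_iff.2 ⟨z⟩
  have hdav : 0 < EGZ.DavC N := EGZ.davC_pos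
  refine Nat.sInf_le ⟨by omega, fun T hT => ?_⟩
  have hsum : EGZ.mSum T = z := hz.mSum_eq_of_card_le hnil (by omega)
  obtain ⟨B, hBT, hBcard, hB⟩ := EGZ.exists_le_card_lt_davC_eqSum T
  obtain ⟨C, hBC, hCT, hCcard⟩ :=
    EGZ.exists_between_card_eq (n := Multiset.card T - EGZ.kappa N) hBT (by omega) (by omega)
  exact ⟨C, hCT, by omega, hB.of_le hz hsum hBC⟩
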